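/- arXiv:1104.1037 — 2 statements merged into one kernel-verified Lean document; each statement's English description precedes it below -/
import Mathlib

section
/- Let S be the product of a nonempty finite list w₁, …, w_r of elements of G such that every wᵢ lies in {a, a², b}, in any two consecutive entries exactly one is equal to b, and w₁ ∈ {a, a²}. Then for every integer m, b·S ≠ (a·b·a)^m and a²·b·a²·b·S ≠ (a·b·a)^m. -/
/-- The free product `(ℤ/3ℤ) ∗ (ℤ/2ℤ)` (isomorphic to `PSL(2,ℤ)`). -/
abbrev G : Type := Monoid.Coprod (Multiplicative (ZMod 3)) (Multiplicative (ZMod 2))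

/-- `a` is the image in `G` of the generator of `ℤ/3ℤ`, so `a³ = 1`. -/
def a : G := Monoid.Coprod.inl (Multiplicative.ofAdd (1 : ZMod 3))

/-- `b` is the image in `G` of the generator of `ℤ/2ℤ`, so `b² = 1`. -/
def b : G := Monoid.Coprod.inr (Multiplicative.ofAdd (1 : ZMod 2))

/-- A list `w₁, …, w_r` is a reduced sequence if every entry lies in `{a, a², b}`,
of any two consecutive entries exactly one equals `b`. -/
def IsReducedSeq (ws : List G) : Prop :=
  (∀ w ∈ ws, w = a ∨ w = a ^ 2 ∨ w = b) ∧
  List.Chain' (fun x y => (x = b ∧ y ≠ b) ∨ (x ≠ b ∧ y = b)) ws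

/-!
Let `a` and `b` act on the projective line by `t ↦ -1 - 1 / t` and `t ↦ -1 / t`. Then `a` and `a²`
map the arc `[0, ∞]` and the point `-1` into `[∞, 0]`, and `b` maps `[∞, 0]` into `[0, ∞]`. Hence
`S` sends `-1` into `[∞, 0]` and `b * S` sends it into `[0, ∞]`, whereas `a * b * a` fixes `-1`.
The second inequality reduces to the first because `a² * b * a²` is the inverse of `a * b * a`.
-/

open Matrix MatrixGroups ModularGroup Subgroup

theorem a_ne_b : a ≠ b := fun h => by
  simpa [a, b] using congrArg Monoid.Coprod.fst h

theorem a_sq_ne_b : a ^ 2 ≠ b := fun h => by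
  have hfst : Multiplicative.ofAdd (1 : ZMod 3) ^ 2 = 1 := by
    simpa [a, b] using congrArg Monoid.Coprod.fst h
  revert hfst
  decide

theorem a_pow_three : a ^ 3 = 1 := by
  have h : (3 : ℕ) • (1 : ZMod 3) = 0 := rfl
  rw [a, ← map_pow, ← ofAdd_nsmul, h, ofAdd_zero, map_one]

theorem b_mul_self : b * b = 1 := by
  have h : (1 : ZMod 2) + 1 = 0 := rfl
  rw [b, ← map_mul, ← ofAdd_add, h, ofAdd_zero, map_one]

theorem a_sq_mul_b_mul_a_sq : a ^ 2 * b * a ^ 2 = (a * b * a)⁻¹ := by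
  rw [eq_inv_iff_mul_eq_one]
  calc a ^ 2 * b * a ^ 2 * (a * b * a) = a ^ 2 * b * a ^ 3 * b * a := by group
    _ = a ^ 2 * (b * b) * a := by rw [a_pow_three]; group
    _ = 1 := by rw [b_mul_self, mul_one, ← pow_succ, a_pow_three]

section ZModPowersHom

variable {M : Type*} [Group M] (n : ℕ) (x : M) (hx : x ^ n = 1)

/-- The homomorphism `ℤ/nℤ → M` with `1 ↦ x`, for `x ^ n = 1`; it supplies the factors of a
homomorphism out of `G`. -/
def zmodPowersHom : Multiplicative (ZMod n) →* M :=
  AddMonoidHom.toMultiplicativeLeft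
    (ZMod.lift n ⟨zmultiplesHom (Additive M) (.ofMul x), by simp [← ofMul_pow, hx]⟩)

theorem zmodPowersHom_ofAdd_one : zmodPowersHom n x hx (Multiplicative.ofAdd 1) = x := by
  rw [← Int.cast_one]
  simp [zmodPowersHom, -Int.cast_one]

end ZModPowersHom

section PingPong

variable {X : Type*} [MulAction G X] {N P : Set X} {p : X}

theorem IsReducedSeq.prod_smul_mem (ha : ∀ x ∈ P, a • x ∈ N) (ha_sq : ∀ x ∈ P, a ^ 2 • x ∈ N)
    (hb : ∀ x ∈ N, b • x ∈ P) (hpN : p ∈ N) (hpP : p ∈ P)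
    {ws : List G} (hws : IsReducedSeq ws) :
    ((∀ w ∈ ws.head?, w ≠ b) → ws.prod • p ∈ N) ∧ ((∀ w ∈ ws.head?, w = b) → ws.prod • p ∈ P) := by
  induction ws with
  | nil => simp [hpN, hpP]
  | cons w ws ih =>
    obtain ⟨hletters, hchain⟩ := hws
    obtain ⟨hhead, htail⟩ := List.isChain_cons.mp hchain
    obtain ⟨ihN, ihP⟩ := ih ⟨fun v hv => hletters v (List.mem_cons_of_mem w hv), htail⟩
    rw [List.prod_cons, mul_smul]
    simp only [List.head?_cons, Option.mem_some_iff, forall_eq']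
    constructor
    · intro hw
      have hx := ihP fun v hv => ((hhead v hv).resolve_left fun h => hw h.1).2
      rcases hletters w List.mem_cons_self with rfl | rfl | rfl
      · exact ha _ hx
      · exact ha_sq _ hx
      · exact absurd rfl hw
    · rintro rfl
      exact hb _ (ihN fun v hv => ((hhead v hv).resolve_right fun h => h.1 rfl).2)

end PingPong

section Moebius

open OnePoint

variable {K : Type*} [Field K] [DecidableEq K]

variable (K) in
/-- The action of `SL(2, ℤ)` on the projective line over `K` by Möbius transformations. -/
def moebius : SL(2, ℤ) →* Equiv.Perm (OnePoint K) :=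
  (MulAction.toPermHom (GL (Fin 2) K) (OnePoint K)).comp (SpecialLinearGroup.mapGL K)

theorem moebius_S_infty : moebius K S ∞ = (0 : K) := by
  simp [moebius, smul_infty_eq_ite, coe_S]

theorem moebius_S_coe (t : K) :
    moebius K S t = if t = 0 then ∞ else ((-t⁻¹ : K) : OnePoint K) := by
  simp [moebius, smul_some_eq_ite, coe_S, neg_div]

theorem moebius_inv_T_mul_S_pow_three : moebius K (T⁻¹ * S) ^ 3 = 1 := by
  have h : (T⁻¹ * S) ^ 3 = 1 := by decide
  rw [← map_pow, h, map_one]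

theorem moebius_S_sq : moebius K S ^ 2 = 1 := by
  ext x
  rw [sq, Equiv.Perm.mul_apply]
  induction x using OnePoint.rec with
  | infty => simp [moebius_S_infty, moebius_S_coe]
  | coe t => by_cases ht : t = 0 <;> simp [moebius_S_infty, moebius_S_coe, ht]

/-- The action of `G ≅ PSL(2, ℤ)` on the projective line over `K`, with `a` acting as
`t ↦ -1 - 1 / t` and `b` as `t ↦ -1 / t`. -/
instance moebiusAction : MulAction G (OnePoint K) :=
  MulAction.compHom (OnePoint K) (Monoid.Coprod.lift
    (zmodPowersHom 3 (moebius K (T⁻¹ * S)) moebius_inv_T_mul_S_pow_three)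
    (zmodPowersHom 2 (moebius K S) moebius_S_sq))

theorem a_smul (x : OnePoint K) : a • x = moebius K (T⁻¹ * S) x :=
  DFunLike.congr_fun
    (zmodPowersHom_ofAdd_one 3 (moebius K (T⁻¹ * S)) moebius_inv_T_mul_S_pow_three) x

theorem b_smul (x : OnePoint K) : b • x = moebius K S x :=
  DFunLike.congr_fun (zmodPowersHom_ofAdd_one 2 (moebius K S) moebius_S_sq) x

theorem a_smul_infty : a • (∞ : OnePoint K) = (-1 : K) := by
  simp [a_smul, moebius, smul_infty_eq_ite, -map_mul]

theorem a_smul_coe (t : K) :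
    a • (t : OnePoint K) = if t = 0 then ∞ else ((-1 - t⁻¹ : K) : OnePoint K) := by
  have h (ht : t ≠ 0) : (-t - 1) / t = -1 - t⁻¹ := by field_simp
  simp +contextual [a_smul, moebius, smul_some_eq_ite, -map_mul, ← sub_eq_add_neg, h]

theorem a_sq_smul_infty : a ^ 2 • (∞ : OnePoint K) = (0 : K) := by
  simp [sq, mul_smul, a_smul_infty, a_smul_coe]

theorem a_sq_smul_coe (t : K) :
    a ^ 2 • (t : OnePoint K) = if t = -1 then ∞ else ((-(t + 1)⁻¹ : K) : OnePoint K) := by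
  rw [sq, mul_smul, a_smul_coe]
  rcases eq_or_ne t 0 with rfl | ht
  · simp [a_smul_infty]
  rcases eq_or_ne t (-1) with rfl | ht'
  · simp [a_smul_coe]
  have hne : t + 1 ≠ 0 := by rwa [ne_eq, add_eq_zero_iff_eq_neg]
  have hsum : -1 - t⁻¹ = -(t + 1) / t := by field_simp; ring
  have hval : -1 - (-(t + 1) / t)⁻¹ = -(t + 1)⁻¹ := by field_simp; ring
  simp only [ht, ht', if_false, a_smul_coe, hsum, hval, div_eq_zero_iff, neg_eq_zero, hne, or_self]

theorem b_smul_infty : b • (∞ : OnePoint K) = (0 : K) := by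
  rw [b_smul, moebius_S_infty]

theorem b_smul_coe (t : K) :
    b • (t : OnePoint K) = if t = 0 then ∞ else ((-t⁻¹ : K) : OnePoint K) := by
  rw [b_smul, moebius_S_coe]

theorem a_mul_b_mul_a_smul_neg_one : (a * b * a) • ((-1 : K) : OnePoint K) = (-1 : K) := by
  simp [mul_smul, a_smul_coe, b_smul_coe, a_smul_infty]

end Moebius

section Arcs

open OnePoint

variable {K : Type*} [Field K] [LinearOrder K]

variable (K) in
/-- The arc `[∞, 0]` of the projective line, consisting of `∞` and the `t ≤ 0`. -/
def nonposArc : Set (OnePoint K) := insert ∞ ((↑) '' Set.Iic (0 : K))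

variable (K) in
/-- The arc `[0, ∞]` of the projective line, consisting of `∞` and the `t ≥ 0`. -/
def nonnegArc : Set (OnePoint K) := insert ∞ ((↑) '' Set.Ici (0 : K))

variable [IsStrictOrderedRing K] {x : OnePoint K}

theorem b_smul_mem_nonnegArc (hx : x ∈ nonposArc K) : b • x ∈ nonnegArc K := by
  obtain rfl | ⟨t, ht : t ≤ 0, rfl⟩ := hx
  · simp [b_smul_infty, nonnegArc]
  · rw [b_smul_coe]
    split_ifs <;> simp [nonnegArc, ht]

theorem a_smul_mem_nonposArc (hx : x ∈ insert ((-1 : K) : OnePoint K) (nonnegArc K)) :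
    a • x ∈ nonposArc K := by
  obtain rfl | rfl | ⟨t, ht : 0 ≤ t, rfl⟩ := hx
  · simp [a_smul_coe, nonposArc]
  · simp [a_smul_infty, nonposArc]
  · have h : -1 - t⁻¹ ≤ 0 := by linarith [inv_nonneg.mpr ht]
    rw [a_smul_coe]
    split_ifs <;> simp [nonposArc, h]

theorem a_sq_smul_mem_nonposArc (hx : x ∈ insert ((-1 : K) : OnePoint K) (nonnegArc K)) :
    a ^ 2 • x ∈ nonposArc K := by
  obtain rfl | rfl | ⟨t, ht : 0 ≤ t, rfl⟩ := hx
  · simp [a_sq_smul_coe, nonposArc]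
  · simp [a_sq_smul_infty, nonposArc]
  · have h : 0 ≤ t + 1 := add_nonneg ht zero_le_one
    rw [a_sq_smul_coe]
    split_ifs <;> simp [nonposArc, h]

end Arcs

theorem mul_prod_notMem_zpowers {ws : List G} (hws : IsReducedSeq ws)
    (hhead : ∀ w ∈ ws.head?, w ≠ b) : b * ws.prod ∉ zpowers (a * b * a) := by
  intro hmem
  -- The arc `[0, ∞]` is enlarged by `-1` so that the base point lies in both ping-pong sets.
  have hS : ws.prod • ((-1 : ℚ) : OnePoint ℚ) ∈ nonposArc ℚ :=
    (hws.prod_smul_mem (P := insert ((-1 : ℚ) : OnePoint ℚ) (nonnegArc ℚ))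
      (fun _ => a_smul_mem_nonposArc) (fun _ => a_sq_smul_mem_nonposArc)
      (fun _ hx => .inr (b_smul_mem_nonnegArc hx)) (by simp [nonposArc]) (.inl rfl)).1 hhead
  have hfix : b • ws.prod • ((-1 : ℚ) : OnePoint ℚ) = (-1 : ℚ) := by
    rw [← mul_smul]
    exact zpowers_le.mpr (MulAction.mem_stabilizer_iff.mpr a_mul_b_mul_a_smul_neg_one) hmem
  have hneg : ((-1 : ℚ) : OnePoint ℚ) ∈ nonnegArc ℚ := hfix ▸ b_smul_mem_nonnegArc hS
  norm_num [nonnegArc] at hneg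

/-- If `S` is the product of a nonempty reduced sequence starting with `a` or `a²`,
then for every integer `m`, `b·S ≠ (a·b·a)^m` and `a²·b·a²·b·S ≠ (a·b·a)^m`. -/
theorem stmt2 (ws : List G) (hne : ws ≠ []) (hred : IsReducedSeq ws)
    (hhead : ws.head? = some a ∨ ws.head? = some (a ^ 2)) (m : ℤ) :
    b * ws.prod ≠ (a * b * a) ^ m ∧
    a ^ 2 * b * a ^ 2 * b * ws.prod ≠ (a * b * a) ^ m := by
  have hb : ∀ w ∈ ws.head?, w ≠ b := by
    rcases hhead with h | h <;> simp [h, a_ne_b, a_sq_ne_b]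
  have hmem := mul_prod_notMem_zpowers hred hb
  refine ⟨fun h => hmem ⟨m, h.symm⟩, fun h => hmem ?_⟩
  rw [mul_assoc, a_sq_mul_b_mul_a_sq, inv_mul_eq_iff_eq_mul] at h
  exact h ▸ mul_mem (mem_zpowers _) (zpow_mem_zpowers _ m)
end

section
/- Let s ≥ 2 and let n₁, …, n_s be integers which all have the same parity (nᵢ ≡ nⱼ (mod 2) for all i, j). Suppose that for some integer n the ordered product (X₁^{−n₁} · X₂ · X₁^{n₁}) · (X₁^{−n₂} · X₂ · X₁^{n₂}) ⋯ (X₁^{−n_s} · X₂ · X₁^{n_s}) equals X₁^n or −X₁^n. Then there exists an index i ∈ {1, …, s−1} with nᵢ − n_{i+1} = 2. -/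
/-- `X₁` is the matrix with rows `(1,0), (1,1)` in `SL(2,ℤ)`. -/
def X₁ : Matrix.SpecialLinearGroup (Fin 2) ℤ :=
  ⟨!![1, 0; 1, 1], by simp [Matrix.det_fin_two_of]⟩

/-- `X₂` is the matrix with rows `(1,-1), (0,1)` in `SL(2,ℤ)`. -/
def X₂ : Matrix.SpecialLinearGroup (Fin 2) ℤ :=
  ⟨!![1, -1; 0, 1], by simp [Matrix.det_fin_two_of]⟩

/-! Since `X₁ X₂ X₁ = S`, the twist conjugated by `X₁ ^ m` is `X₁ ^ (-(m + 1)) S X₁ ^ (m - 1)`, so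
the ordered product telescopes to
`X₁ ^ (-(n₁ + 1)) S X₁ ^ (n₁ - n₂ - 2) S ⋯ S X₁ ^ (nₛ - 1)`.
If every inner exponent `k` satisfies `2 ≤ |k|`, then each `S X₁ ^ k` maps columns `(x, y)` with
`x ≠ 0` and `|y| ≤ |x|` to columns of the same kind. Hence the upper right entry of the product does
not vanish, whereas that of `± X₁ ^ n` does. Inner exponents are even when the `nᵢ` have equal
parity, so that the only one with `|k| < 2` is `k = 0`. -/

lemma abs_le_abs_add_mul_of_two_le_abs {R : Type*} [Ring R] [LinearOrder R] [IsOrderedRing R]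
    {x y k : R} (hyx : |y| ≤ |x|) (hk : 2 ≤ |k|) : |x| ≤ |y + k * x| := by
  have hkx : 2 * |x| ≤ |k * x| := by
    rw [abs_mul]
    exact mul_le_mul_of_nonneg_right hk (abs_nonneg x)
  calc |x| = 2 * |x| - |x| := by rw [two_mul, add_sub_cancel_right]
    _ ≤ |k * x| - |y| := sub_le_sub hkx hyx
    _ ≤ |k * x + y| := abs_sub_abs_le_abs_add _ _
    _ = |y + k * x| := by rw [add_comm]

section

open ModularGroup Matrix.SpecialLinearGroup

lemma X₁_eq_conj_T_inv : X₁ = S * T⁻¹ * S⁻¹ := by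
  decide

lemma X₁_mul_X₂_mul_X₁ : X₁ * X₂ * X₁ = S := by
  decide

lemma coe_X₁_zpow (k : ℤ) : (X₁ ^ k).1 = !![1, 0; k, 1] := by
  rw [X₁_eq_conj_T_inv, conj_zpow, inv_zpow', coe_mul, coe_mul, coe_T_zpow, coe_inv, coe_S]
  simp

lemma X₁_zpow_mul_apply_zero (k : ℤ) (P : Matrix.SpecialLinearGroup (Fin 2) ℤ) (j : Fin 2) :
    (X₁ ^ k * P) 0 j = P 0 j := by
  simp [coe_X₁_zpow, Matrix.mul_apply]

lemma X₁_zpow_mul_apply_one (k : ℤ) (P : Matrix.SpecialLinearGroup (Fin 2) ℤ) (j : Fin 2) :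
    (X₁ ^ k * P) 1 j = P 1 j + k * P 0 j := by
  simp [coe_X₁_zpow, Matrix.mul_apply, add_comm]

lemma S_mul_apply_zero (P : Matrix.SpecialLinearGroup (Fin 2) ℤ) (j : Fin 2) :
    (S * P) 0 j = -P 1 j := by
  simp [coe_S, Matrix.mul_apply]

lemma S_mul_apply_one (P : Matrix.SpecialLinearGroup (Fin 2) ℤ) (j : Fin 2) :
    (S * P) 1 j = P 0 j := by
  simp [coe_S, Matrix.mul_apply]

/-- The conjugate `X₁ ^ (-m) X₂ X₁ ^ m` of the twist `X₂`, a factor of the ordered product. -/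
def conjTwist (m : ℤ) : Matrix.SpecialLinearGroup (Fin 2) ℤ :=
  X₁ ^ (-m) * X₂ * X₁ ^ m

lemma X₁_zpow_mul_conjTwist (m : ℤ) : X₁ ^ (m + 1) * conjTwist m = S * X₁ ^ (m - 1) := by
  rw [conjTwist, ← X₁_mul_X₂_mul_X₁]
  group

/-- A matrix is top dominant if the upper entry of its second column is nonzero and at least as
large in absolute value as the lower one. This is the condition preserved along the ordered product
when its inner exponents have absolute value at least two. -/
def IsTopDominant (P : Matrix.SpecialLinearGroup (Fin 2) ℤ) : Prop :=
  P 0 1 ≠ 0 ∧ |P 1 1| ≤ |P 0 1|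

lemma isTopDominant_S_mul_X₁_zpow (k : ℤ) : IsTopDominant (S * X₁ ^ k) := by
  simp [IsTopDominant, S_mul_apply_zero, S_mul_apply_one, coe_X₁_zpow]

lemma IsTopDominant.S_mul_X₁_zpow_mul {P : Matrix.SpecialLinearGroup (Fin 2) ℤ} {k : ℤ}
    (hP : IsTopDominant P) (hk : 2 ≤ |k|) : IsTopDominant (S * (X₁ ^ k * P)) := by
  obtain ⟨hne, hle⟩ := hP
  have hgrow : |P 0 1| ≤ |P 1 1 + k * P 0 1| := abs_le_abs_add_mul_of_two_le_abs hle hk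
  rw [IsTopDominant, S_mul_apply_zero, S_mul_apply_one, X₁_zpow_mul_apply_zero,
    X₁_zpow_mul_apply_one, abs_neg, neg_ne_zero]
  exact ⟨abs_pos.mp ((abs_pos.mpr hne).trans_le hgrow), hgrow⟩

lemma isTopDominant_X₁_zpow_mul_prod_conjTwist (m : ℤ) (l : List ℤ)
    (hl : (m :: l).IsChain fun a b => 2 ≤ |a - b - 2|) :
    IsTopDominant (X₁ ^ (m + 1) * ((m :: l).map conjTwist).prod) := by
  induction l generalizing m with
  | nil =>
    rw [List.map_singleton, List.prod_singleton, X₁_zpow_mul_conjTwist]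
    exact isTopDominant_S_mul_X₁_zpow _
  | cons b l ih =>
    obtain ⟨hmb, hbl⟩ := List.isChain_cons_cons.mp hl
    have htelescope : X₁ ^ (m + 1) * ((m :: b :: l).map conjTwist).prod =
        S * (X₁ ^ (m - b - 2) * (X₁ ^ (b + 1) * ((b :: l).map conjTwist).prod)) := by
      rw [List.map_cons, List.prod_cons, ← mul_assoc, X₁_zpow_mul_conjTwist, mul_assoc,
        ← mul_assoc (X₁ ^ (m - b - 2)), ← zpow_add, show m - b - 2 + (b + 1) = m - 1 by ring]
    rw [htelescope]
    exact (ih b hbl).S_mul_X₁_zpow_mul hmb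

lemma prod_conjTwist_apply_zero_one_ne_zero {l : List ℤ} (hne : l ≠ [])
    (hl : l.IsChain fun a b => 2 ≤ |a - b - 2|) : (l.map conjTwist).prod 0 1 ≠ 0 := by
  obtain ⟨m, l, rfl⟩ := List.exists_cons_of_ne_nil hne
  rw [← X₁_zpow_mul_apply_zero (m + 1)]
  exact (isTopDominant_X₁_zpow_mul_prod_conjTwist m l hl).1

lemma apply_zero_one_eq_zero_of_eq_X₁_zpow_or_neg {P : Matrix.SpecialLinearGroup (Fin 2) ℤ} {n : ℤ}
    (hP : P = X₁ ^ n ∨ P = -(X₁ ^ n)) : P 0 1 = 0 := by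
  rcases hP with rfl | rfl <;> simp [coe_X₁_zpow]

end

theorem stmt5_general (s : ℕ) (hs : s ≠ 0) (ns : Fin s → ℤ) (n : ℤ)
    (hprod : (List.ofFn fun i => X₁ ^ (-(ns i)) * X₂ * X₁ ^ (ns i)).prod = X₁ ^ n ∨
             (List.ofFn fun i => X₁ ^ (-(ns i)) * X₂ * X₁ ^ (ns i)).prod = -(X₁ ^ n)) :
    ∃ i : ℕ, ∃ h : i + 1 < s, |ns ⟨i, Nat.lt_of_succ_lt h⟩ - ns ⟨i + 1, h⟩ - 2| < 2 := by
  by_contra! hfar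
  have hchain : (List.ofFn ns).IsChain fun a b => 2 ≤ |a - b - 2| := List.isChain_ofFn.mpr hfar
  have hentry : ((List.ofFn ns).map conjTwist).prod 0 1 ≠ 0 :=
    prod_conjTwist_apply_zero_one_ne_zero (mt List.ofFn_eq_nil_iff.mp hs) hchain
  rw [List.map_ofFn] at hentry
  exact hentry (apply_zero_one_eq_zero_of_eq_X₁_zpow_or_neg hprod)

/-- Let `s ≥ 2` and let `n₁, …, n_s` be integers all of the same parity.  If the ordered
product `(X₁^{-n₁} X₂ X₁^{n₁}) ⋯ (X₁^{-n_s} X₂ X₁^{n_s})` equals `X₁^n` or `-X₁^n` for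
some integer `n`, then `nᵢ - n_{i+1} = 2` for some index `i ∈ {1, …, s-1}`. -/
theorem stmt5 (s : ℕ) (hs : 2 ≤ s) (ns : Fin s → ℤ)
    (hpar : ∀ i j, ns i % 2 = ns j % 2) (n : ℤ)
    (hprod : (List.ofFn fun i => X₁ ^ (-(ns i)) * X₂ * X₁ ^ (ns i)).prod = X₁ ^ n ∨
             (List.ofFn fun i => X₁ ^ (-(ns i)) * X₂ * X₁ ^ (ns i)).prod = -(X₁ ^ n)) :
    ∃ i : ℕ, ∃ h : i + 1 < s, ns ⟨i, by omega⟩ - ns ⟨i + 1, h⟩ = 2 := by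
  obtain ⟨i, h, hi⟩ := stmt5_general s (by omega) ns n hprod
  have hmod := hpar ⟨i, Nat.lt_of_succ_lt h⟩ ⟨i + 1, h⟩
  rw [abs_lt] at hi
  exact ⟨i, h, by omega⟩
end
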